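/- Let E₁₀ = diag(0,0,1). (i) For λ ∈ ℝ with λ(λ ± √3) ≠ 0, the symmetric bilinear form on T*𝔥₃ with matrix [[E₁₀, M],[Mᵀ, E₁₀]] in the basis (e₁,…,e₆), where M = diag(λ ± √3, λ, 0), is flat: its curvature R vanishes identically. (ii) For λ₁ ∈ ℝ, the symmetric bilinear form with matrix [[−E₁₀, M],[Mᵀ, E₁₀]], where M = [[λ₁, ∓√3/2, 0],[±√3/2, λ₁, 0],[0,0,0]], is flat. -/

import Mathlib

open Matrix

noncomputable section

/-- The Lie bracket of `T*𝔥₃` in the basis `(e₁,…,e₆)`: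
`[e₁,e₂]=e₆`, `[e₁,e₃]=−e₅`, `[e₂,e₃]=e₄`. -/
def bra (x y : Fin 6 → ℝ) : Fin 6 → ℝ :=
  ![0, 0, 0, x 1 * y 2 - x 2 * y 1, x 2 * y 0 - x 0 * y 2, x 0 * y 1 - x 1 * y 0]

/-- The bilinear form associated to the matrix `A`. -/
def gm (A : Matrix (Fin 6) (Fin 6) ℝ) (x y : Fin 6 → ℝ) : ℝ := x ⬝ᵥ A.mulVec y

/-- Curvature `R(x,y)z = ∇ₓ∇_y z − ∇_y∇ₓ z − ∇_{[x,y]} z` of a connection `D`. -/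
def curv (D : (Fin 6 → ℝ) → (Fin 6 → ℝ) → (Fin 6 → ℝ)) (x y z : Fin 6 → ℝ) :
    Fin 6 → ℝ :=
  D x (D y z) - D y (D x z) - D (bra x y) z

/-- `E₁₀ = diag(0,0,1)`. -/
def E10 : Matrix (Fin 3) (Fin 3) ℝ := Matrix.diagonal ![0, 0, 1]

/-!
For the metric with blocks `ε E₁₀`, `m ⊕ 0`, `δ E₁₀`, where `m` is an invertible `2 × 2` matrix,
`∇ₓ y` has no `(e₁,e₂)`-part, and its `e₃`- and `e₆`-coordinates depend only on the `(e₁,e₂)`-parts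
of `x` and `y`: the former through a symmetric form `σ` of determinant `-discr m`, the latter
through the area form `ω`. All terms of `⟨R(x,y)z, w⟩` are then products of two values of `σ` or of
two values of `ω`; in dimension two their antisymmetrization in `x` and `y` is a multiple of
`ω(x,y) ω(z,w)`, and altogether
`4 ε ⟨R(x,y)z, w⟩ = (3 ε δ - discr m) ω(x,y) ω(z,w)`.
The two families have `discr m = (±√3)² = 3` and `discr m = -4 (√3 / 2)² = -3`, with `ε δ = 1` and
`ε δ = -1` respectively.
-/

section PlaneForms

variable {R : Type*} [CommRing R]

/-- The matrix of the standard area form `ω(u, v) = u₀ v₁ - u₁ v₀` on the plane. -/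
def areaForm : Matrix (Fin 2) (Fin 2) R := !![0, 1; -1, 0]

/-- The Gram matrix of the symmetrization `(u, v) ↦ u ⬝ m J v + v ⬝ m J u`, where `J` is the matrix
`areaForm`; it governs the `e₃`-coordinate of the Levi-Civita connection. -/
def symmTwist (m : Matrix (Fin 2) (Fin 2) R) : Matrix (Fin 2) (Fin 2) R :=
  m * areaForm + (m * areaForm)ᵀ

theorem det_areaForm : (areaForm : Matrix (Fin 2) (Fin 2) R).det = 1 := by
  simp [areaForm, det_fin_two]

theorem dotProduct_areaForm_mulVec (u v : Fin 2 → R) :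
    u ⬝ᵥ areaForm *ᵥ v = u 0 * v 1 - u 1 * v 0 := by
  simp [areaForm, dotProduct, mulVec, Fin.sum_univ_two, sub_eq_add_neg]

theorem dotProduct_areaForm_mulVec_swap (u v : Fin 2 → R) :
    v ⬝ᵥ areaForm *ᵥ u = -(u ⬝ᵥ areaForm *ᵥ v) := by
  simp only [dotProduct_areaForm_mulVec]
  ring

theorem det_symmTwist [Nontrivial R] (m : Matrix (Fin 2) (Fin 2) R) :
    (symmTwist m).det = -m.discr := by
  simp only [symmTwist, areaForm, discr_fin_two, trace_fin_two, det_fin_two, Matrix.add_apply,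
    transpose_apply, mul_apply, Fin.sum_univ_two, of_apply, cons_val', cons_val_zero,
    cons_val_one, cons_val_fin_one]
  ring

theorem dotProduct_symmTwist_mulVec (m : Matrix (Fin 2) (Fin 2) R) (u v : Fin 2 → R) :
    u ⬝ᵥ symmTwist m *ᵥ v = u ⬝ᵥ m *ᵥ areaForm *ᵥ v + v ⬝ᵥ m *ᵥ areaForm *ᵥ u := by
  rw [symmTwist, add_mulVec, dotProduct_add, mulVec_transpose, dotProduct_comm u (v ᵥ* _),
    ← dotProduct_mulVec, mulVec_mulVec, mulVec_mulVec]

theorem dotProduct_mulVec_mul_sub_mul_eq_det_mul (S : Matrix (Fin 2) (Fin 2) R)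
    (u v z w : Fin 2 → R) :
    (u ⬝ᵥ S *ᵥ z) * (v ⬝ᵥ S *ᵥ w) - (u ⬝ᵥ S *ᵥ w) * (v ⬝ᵥ S *ᵥ z) =
      S.det * (u ⬝ᵥ areaForm *ᵥ v) * (z ⬝ᵥ areaForm *ᵥ w) := by
  rw [dotProduct_areaForm_mulVec, dotProduct_areaForm_mulVec, det_fin_two]
  simp only [dotProduct, mulVec, Fin.sum_univ_two]
  ring

end PlaneForms

/-- The `(e₁, e₂)`-part of a vector of `T*𝔥₃`. -/
def basePlane (x : Fin 6 → ℝ) : Fin 2 → ℝ := ![x 0, x 1]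

/-- The `(e₄, e₅)`-part of a vector of `T*𝔥₃`. -/
def fibrePlane (x : Fin 6 → ℝ) : Fin 2 → ℝ := ![x 3, x 4]

/-- The metric on `T*𝔥₃` with blocks `ε E₁₀`, `m ⊕ 0` and `δ E₁₀`. -/
def blockMetric (ε δ : ℝ) (m : Matrix (Fin 2) (Fin 2) ℝ) : Matrix (Fin 6) (Fin 6) ℝ :=
  let M : Matrix (Fin 3) (Fin 3) ℝ := !![m 0 0, m 0 1, 0; m 1 0, m 1 1, 0; 0, 0, 0]
  reindex finSumFinEquiv finSumFinEquiv (fromBlocks (ε • E10) M Mᵀ (δ • E10))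

/-- `D` satisfies the Koszul formula for the bilinear form with matrix `A`. When `A` is
nondegenerate, this says that `D` is its Levi-Civita connection. -/
def IsLeviCivita (A : Matrix (Fin 6) (Fin 6) ℝ)
    (D : (Fin 6 → ℝ) → (Fin 6 → ℝ) → (Fin 6 → ℝ)) : Prop :=
  ∀ x y z, 2 * gm A (D x y) z = gm A (bra x y) z - gm A (bra y z) x + gm A (bra z x) y

theorem gm_sub_left (A : Matrix (Fin 6) (Fin 6) ℝ) (x y z : Fin 6 → ℝ) :
    gm A (x - y) z = gm A x z - gm A y z :=
  sub_dotProduct ..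

theorem basePlane_bra (x y : Fin 6 → ℝ) : basePlane (bra x y) = 0 := by
  simp [basePlane, bra]

theorem bra_apply_two (x y : Fin 6 → ℝ) : bra x y 2 = 0 := rfl

theorem bra_apply_five (x y : Fin 6 → ℝ) :
    bra x y 5 = basePlane x ⬝ᵥ areaForm *ᵥ basePlane y := by
  rw [dotProduct_areaForm_mulVec]
  rfl

theorem fibrePlane_bra (x y : Fin 6 → ℝ) :
    fibrePlane (bra x y) = areaForm *ᵥ (y 2 • basePlane x - x 2 • basePlane y) := by
  ext i
  fin_cases i <;> simp [fibrePlane, bra, areaForm, basePlane] <;> ring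

section BlockMetric

variable {ε δ : ℝ} {m : Matrix (Fin 2) (Fin 2) ℝ}

theorem gm_blockMetric (x y : Fin 6 → ℝ) :
    gm (blockMetric ε δ m) x y =
      basePlane x ⬝ᵥ m *ᵥ fibrePlane y + basePlane y ⬝ᵥ m *ᵥ fibrePlane x
        + ε * x 2 * y 2 + δ * x 5 * y 5 := by
  have hsymm : ∀ k : Fin 6, (finSumFinEquiv (m := 3) (n := 3)).symm k =
      ![.inl 0, .inl 1, .inl 2, .inr 0, .inr 1, .inr 2] k := by decide
  simp only [gm, blockMetric, E10, basePlane, fibrePlane, dotProduct, mulVec, Fin.sum_univ_two,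
    Fin.sum_univ_six, reindex_apply, submatrix_apply, hsymm, cons_val, cons_val', cons_val_zero,
    cons_val_one, cons_val_fin_one, of_apply, fromBlocks_apply₁₁, fromBlocks_apply₁₂,
    fromBlocks_apply₂₁, fromBlocks_apply₂₂, transpose_apply, Matrix.smul_apply, smul_eq_mul,
    diagonal_apply, Fin.reduceEq, if_true, if_false]
  ring

theorem gm_blockMetric_single_two (v : Fin 6 → ℝ) :
    gm (blockMetric ε δ m) v (Pi.single 2 1) = ε * v 2 := by
  simp [gm_blockMetric, basePlane, fibrePlane]

theorem gm_blockMetric_single_five (v : Fin 6 → ℝ) :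
    gm (blockMetric ε δ m) v (Pi.single 5 1) = δ * v 5 := by
  simp [gm_blockMetric, basePlane, fibrePlane]

theorem gm_blockMetric_bra (x y z : Fin 6 → ℝ) :
    gm (blockMetric ε δ m) (bra x y) z =
      y 2 * (basePlane z ⬝ᵥ m *ᵥ areaForm *ᵥ basePlane x)
        - x 2 * (basePlane z ⬝ᵥ m *ᵥ areaForm *ᵥ basePlane y)
        + δ * (basePlane x ⬝ᵥ areaForm *ᵥ basePlane y) * z 5 := by
  simp only [gm_blockMetric, basePlane_bra, bra_apply_two, bra_apply_five, fibrePlane_bra,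
    zero_dotProduct, mulVec_sub, mulVec_smul, dotProduct_sub, dotProduct_smul, smul_eq_mul]
  ring

theorem basePlane_eq_zero_of_gm_eq_zero (hm : m.det ≠ 0) {v : Fin 6 → ℝ}
    (hv : ∀ a b, gm (blockMetric ε δ m) v ![0, 0, 0, a, b, 0] = 0) : basePlane v = 0 := by
  refine (nondegenerate_of_det_ne_zero hm).eq_zero_of_ortho fun t => ?_
  simpa [gm_blockMetric, basePlane, fibrePlane] using hv (t 0) (t 1)

theorem eq_zero_of_gm_blockMetric_eq_zero (hε : ε ≠ 0) (hδ : δ ≠ 0) (hm : m.det ≠ 0)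
    {v : Fin 6 → ℝ} (hv : ∀ w, gm (blockMetric ε δ m) v w = 0) : v = 0 := by
  have hbase : basePlane v = 0 := basePlane_eq_zero_of_gm_eq_zero hm fun a b => hv _
  have hfibre : fibrePlane v = 0 := by
    refine (nondegenerate_of_det_ne_zero hm).eq_zero_of_ortho' fun t => ?_
    simpa [gm_blockMetric, basePlane, fibrePlane, vecHead, vecTail] using
      hv ![t 0, t 1, 0, 0, 0, 0]
  have h2 : v 2 = 0 := by
    simpa [gm_blockMetric_single_two, hε] using hv (Pi.single 2 1)
  have h5 : v 5 = 0 := by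
    simpa [gm_blockMetric_single_five, hδ] using hv (Pi.single 5 1)
  simp only [basePlane, fibrePlane, cons_eq_zero_iff] at hbase hfibre
  ext i
  fin_cases i <;> simp [*]

namespace IsLeviCivita

variable {D : (Fin 6 → ℝ) → (Fin 6 → ℝ) → (Fin 6 → ℝ)}

theorem two_mul_gm_of_basePlane_eq_zero (hD : IsLeviCivita (blockMetric ε δ m) D)
    (x y : Fin 6 → ℝ) {w : Fin 6 → ℝ} (hw : basePlane w = 0) :
    2 * gm (blockMetric ε δ m) (D x y) w =
      δ * (basePlane x ⬝ᵥ areaForm *ᵥ basePlane y) * w 5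
        - w 2 * (basePlane x ⬝ᵥ symmTwist m *ᵥ basePlane y) := by
  rw [hD, dotProduct_symmTwist_mulVec]
  simp only [gm_blockMetric_bra, hw, mulVec_zero, dotProduct_zero, zero_dotProduct]
  ring

theorem basePlane_apply (hD : IsLeviCivita (blockMetric ε δ m) D) (hm : m.det ≠ 0)
    (x y : Fin 6 → ℝ) : basePlane (D x y) = 0 := by
  refine basePlane_eq_zero_of_gm_eq_zero (ε := ε) (δ := δ) hm fun a b => ?_
  simpa using hD.two_mul_gm_of_basePlane_eq_zero x y (w := ![0, 0, 0, a, b, 0])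
    (by simp [basePlane])

theorem two_mul_mul_apply_two (hD : IsLeviCivita (blockMetric ε δ m) D) (x y : Fin 6 → ℝ) :
    2 * (ε * D x y 2) = -(basePlane x ⬝ᵥ symmTwist m *ᵥ basePlane y) := by
  rw [← gm_blockMetric_single_two,
    hD.two_mul_gm_of_basePlane_eq_zero x y (by simp [basePlane])]
  simp

theorem two_mul_mul_apply_five (hD : IsLeviCivita (blockMetric ε δ m) D) (x y : Fin 6 → ℝ) :
    2 * (δ * D x y 5) = δ * (basePlane x ⬝ᵥ areaForm *ᵥ basePlane y) := by
  rw [← gm_blockMetric_single_five,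
    hD.two_mul_gm_of_basePlane_eq_zero x y (by simp [basePlane])]
  simp

theorem two_mul_gm_of_basePlane_right_eq_zero (hD : IsLeviCivita (blockMetric ε δ m) D)
    (x w : Fin 6 → ℝ) {y : Fin 6 → ℝ} (hy : basePlane y = 0) :
    2 * gm (blockMetric ε δ m) (D x y) w =
      y 2 * (basePlane x ⬝ᵥ symmTwist m *ᵥ basePlane w)
        - δ * y 5 * (basePlane x ⬝ᵥ areaForm *ᵥ basePlane w) := by
  rw [hD, dotProduct_symmTwist_mulVec]
  simp only [gm_blockMetric_bra, hy, mulVec_zero, dotProduct_zero, zero_dotProduct,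
    dotProduct_areaForm_mulVec_swap (basePlane x) (basePlane w)]
  ring

theorem two_mul_gm_bra_left (hD : IsLeviCivita (blockMetric ε δ m) D) (x y z w : Fin 6 → ℝ) :
    2 * gm (blockMetric ε δ m) (D (bra x y) z) w =
      -(δ * (basePlane x ⬝ᵥ areaForm *ᵥ basePlane y)
        * (basePlane z ⬝ᵥ areaForm *ᵥ basePlane w)) := by
  rw [hD]
  simp only [gm_blockMetric_bra, basePlane_bra, bra_apply_two, bra_apply_five, mulVec_zero,
    dotProduct_zero, zero_dotProduct]
  ring

theorem four_mul_gm_apply_apply (hD : IsLeviCivita (blockMetric ε δ m) D) (hm : m.det ≠ 0)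
    (x y z w : Fin 6 → ℝ) :
    4 * ε * gm (blockMetric ε δ m) (D x (D y z)) w =
      -((basePlane x ⬝ᵥ symmTwist m *ᵥ basePlane w) * (basePlane y ⬝ᵥ symmTwist m *ᵥ basePlane z))
        - ε * δ * ((basePlane x ⬝ᵥ areaForm *ᵥ basePlane w)
          * (basePlane y ⬝ᵥ areaForm *ᵥ basePlane z)) := by
  linear_combination
    2 * ε * hD.two_mul_gm_of_basePlane_right_eq_zero x w (hD.basePlane_apply hm y z)
      + (basePlane x ⬝ᵥ symmTwist m *ᵥ basePlane w) * hD.two_mul_mul_apply_two y z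
      - ε * (basePlane x ⬝ᵥ areaForm *ᵥ basePlane w) * hD.two_mul_mul_apply_five y z

theorem four_mul_gm_curv (hD : IsLeviCivita (blockMetric ε δ m) D) (hm : m.det ≠ 0)
    (x y z w : Fin 6 → ℝ) :
    4 * ε * gm (blockMetric ε δ m) (curv D x y z) w =
      (3 * ε * δ - m.discr) * (basePlane x ⬝ᵥ areaForm *ᵥ basePlane y)
        * (basePlane z ⬝ᵥ areaForm *ᵥ basePlane w) := by
  have hσ := dotProduct_mulVec_mul_sub_mul_eq_det_mul (symmTwist m)
    (basePlane x) (basePlane y) (basePlane z) (basePlane w)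
  have hω := dotProduct_mulVec_mul_sub_mul_eq_det_mul areaForm
    (basePlane x) (basePlane y) (basePlane z) (basePlane w)
  rw [det_symmTwist] at hσ
  rw [det_areaForm] at hω
  rw [curv, gm_sub_left, gm_sub_left]
  linear_combination hD.four_mul_gm_apply_apply hm x y z w - hD.four_mul_gm_apply_apply hm y x z w
    - 2 * ε * hD.two_mul_gm_bra_left x y z w + hσ + ε * δ * hω

theorem curv_eq_zero_iff (hD : IsLeviCivita (blockMetric ε δ m) D) (hε : ε ≠ 0) (hδ : δ ≠ 0)
    (hm : m.det ≠ 0) : (∀ x y z, curv D x y z = 0) ↔ m.discr = 3 * ε * δ := by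
  constructor
  · intro hflat
    have hω : basePlane (Pi.single 0 1) ⬝ᵥ areaForm *ᵥ basePlane (Pi.single 1 1) = 1 := by
      rw [dotProduct_areaForm_mulVec]
      simp [basePlane]
    have hzero : gm (blockMetric ε δ m) 0 (Pi.single 1 1) = 0 := zero_dotProduct _
    have hcurv :=
      hD.four_mul_gm_curv hm (Pi.single 0 1) (Pi.single 1 1) (Pi.single 0 1) (Pi.single 1 1)
    rw [hflat, hzero, hω] at hcurv
    linarith
  · intro hdiscr x y z
    refine eq_zero_of_gm_blockMetric_eq_zero hε hδ hm fun w => ?_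
    simpa [hdiscr, hε] using hD.four_mul_gm_curv hm x y z w

end IsLeviCivita

end BlockMetric

/-- The metrics `(E₁₀, diag(λ±√3, λ, 0), E₁₀)` with `λ(λ±√3) ≠ 0`, and
`(−E₁₀, [[λ₁,∓√3/2,0],[±√3/2,λ₁,0],[0,0,0]], E₁₀)`, are flat. -/
theorem stmt_12 (s lam lam1 : ℝ) (hs : s = 1 ∨ s = -1)
    (hlam : lam * (lam + s * Real.sqrt 3) ≠ 0)
    (S1 S2 : Matrix (Fin 6) (Fin 6) ℝ)
    (hS1 : S1 = Matrix.reindex finSumFinEquiv finSumFinEquiv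
      (Matrix.fromBlocks E10 (Matrix.diagonal ![lam + s * Real.sqrt 3, lam, 0])
        (Matrix.diagonal ![lam + s * Real.sqrt 3, lam, 0])ᵀ E10))
    (hS2 : S2 = Matrix.reindex finSumFinEquiv finSumFinEquiv
      (Matrix.fromBlocks (-E10)
        !![lam1, -(s * (Real.sqrt 3 / 2)), 0; s * (Real.sqrt 3 / 2), lam1, 0; 0, 0, 0]
        (!![lam1, -(s * (Real.sqrt 3 / 2)), 0; s * (Real.sqrt 3 / 2), lam1, 0; 0, 0, 0])ᵀ
        E10))
    (D1 D2 : (Fin 6 → ℝ) → (Fin 6 → ℝ) → (Fin 6 → ℝ))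
    (hk1 : ∀ x y z, 2 * gm S1 (D1 x y) z =
      gm S1 (bra x y) z - gm S1 (bra y z) x + gm S1 (bra z x) y)
    (hk2 : ∀ x y z, 2 * gm S2 (D2 x y) z =
      gm S2 (bra x y) z - gm S2 (bra y z) x + gm S2 (bra z x) y) :
    (∀ x y z, curv D1 x y z = 0) ∧ (∀ x y z, curv D2 x y z = 0) := by
  have hs2 : s ^ 2 = 1 := by rcases hs with rfl | rfl <;> norm_num
  have hr2 : (s * √3) ^ 2 = 3 := by rw [mul_pow, hs2, Real.sq_sqrt (by norm_num), one_mul]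
  have hc2 : (s * (√3 / 2)) ^ 2 = 3 / 4 := by linear_combination hr2 / 4
  have hD1 : IsLeviCivita (blockMetric 1 1 !![lam + s * √3, 0; 0, lam]) D1 := by
    rw [hS1, diagonal_fin_three] at hk1
    rwa [blockMetric, one_smul]
  have hD2 : IsLeviCivita
      (blockMetric (-1) 1 !![lam1, -(s * (√3 / 2)); s * (√3 / 2), lam1]) D2 := by
    rw [hS2] at hk2
    rwa [blockMetric, neg_one_smul, one_smul]
  refine ⟨(hD1.curv_eq_zero_iff one_ne_zero one_ne_zero ?_).2 ?_,
    (hD2.curv_eq_zero_iff (by norm_num) one_ne_zero ?_).2 ?_⟩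
  · simpa [det_fin_two_of, mul_comm] using hlam
  · rw [discr_fin_two, trace_fin_two_of, det_fin_two_of]
    linear_combination hr2
  · rw [det_fin_two_of]
    nlinarith [sq_nonneg lam1]
  · rw [discr_fin_two, trace_fin_two_of, det_fin_two_of]
    linear_combination -4 * hc2
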